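/- arXiv:1407.2367 — 2 statements merged into one kernel-verified Lean document; each statement's English description precedes it below -/
import Mathlib

section
/- Let p ≥ 1 and let k = 2i+1 be odd with 0 ≤ i ≤ p−1. For every partition x_0 < x_1 < ⋯ < x_N of an interval [x_0,x_N] and every 2p-times continuously differentiable function g : [x_0,x_N] → ℝ, the piecewise Lidstone interpolant L^Δ g of g satisfies max_{1 ≤ n ≤ N} sup_{x ∈ (x_{n−1},x_n)} |(g − L^Δ g)^{(k)}(x)| ≤ 2 d · ‖g^{(2p)}‖_∞ · ‖Δ‖^{2p−k}, where d = (−1)^{p−i+1} · 2(2^{2p−2i} − 1) · B_{2p−2i} / (2p−2i)!, B_m denotes the m-th Bernoulli number, ‖Δ‖ = max_{1 ≤ n ≤ N} (x_n − x_{n−1}), and ‖g^{(2p)}‖_∞ = sup_{x ∈ [x_0,x_N]} |g^{(2p)}(x)|. -/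
/-- The defining property of the sequence of Lidstone polynomial functions. -/
def LidstoneProp (Λ : ℕ → ℝ → ℝ) : Prop :=
  (∀ l : ℕ, ∃ P : Polynomial ℝ, ∀ x : ℝ, Λ l x = P.eval x) ∧
  (∀ x : ℝ, Λ 0 x = x) ∧
  (∀ l : ℕ, (∀ x : ℝ, iteratedDeriv 2 (Λ (l + 1)) x = Λ l x) ∧
    Λ (l + 1) 0 = 0 ∧ Λ (l + 1) 1 = 0)

open Polynomial in
/-- Polynomial version of the Lidstone property. -/
def LidPoly (A : ℕ → ℝ[X]) : Prop :=
  A 0 = X ∧ ∀ l, derivative (derivative (A (l + 1))) = A l ∧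
    (A (l + 1)).eval 0 = 0 ∧ (A (l + 1)).eval 1 = 0

open Polynomial in
lemma LidstoneProp.exists_poly {Λ : ℕ → ℝ → ℝ} (h : LidstoneProp Λ) :
    ∃ A : ℕ → ℝ[X], LidPoly A ∧ ∀ l x, Λ l x = (A l).eval x := by
  obtain ⟨h1, h2, h3⟩ := h
  choose A hA using h1
  refine ⟨A, ⟨?_, fun l => ⟨?_, ?_, ?_⟩⟩, hA⟩
  · apply Polynomial.funext
    intro r
    rw [← hA, h2, eval_X]
  · apply Polynomial.funext
    intro r
    rw [← hA, ← (h3 l).1]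
    have e : Λ (l + 1) = fun x => (A (l + 1)).eval x := funext (hA _)
    have e2 : deriv (fun x => (A (l + 1)).eval x) = fun x => (derivative (A (l + 1))).eval x := by
      funext x; exact Polynomial.deriv _
    rw [e, iteratedDeriv_succ, iteratedDeriv_one, e2, Polynomial.deriv]
  · rw [← hA]; exact (h3 l).2.1
  · rw [← hA]; exact (h3 l).2.2

open Polynomial in
lemma LidPoly.unique {A B : ℕ → ℝ[X]} (hA : LidPoly A) (hB : LidPoly B) (l : ℕ) : A l = B l := by
  induction l with
  | zero => rw [hA.1, hB.1]
  | succ l ih =>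
    obtain ⟨a1, a2, a3⟩ := hA.2 l
    obtain ⟨b1, b2, b3⟩ := hB.2 l
    set D := A (l + 1) - B (l + 1) with hD
    have h2 : derivative (derivative D) = 0 := by
      rw [hD, derivative_sub, derivative_sub, a1, b1, ih, sub_self]
    have e1 := eq_C_of_derivative_eq_zero h2
    set c := (derivative D).coeff 0
    have h3 : derivative (D - C c * X) = 0 := by
      rw [derivative_sub, e1]; simp
    have e2 := eq_C_of_derivative_eq_zero h3
    set d := (D - C c * X).coeff 0
    have e3 : D = C d + C c * X := by rw [← e2]; ring
    have v0 : D.eval 0 = 0 := by rw [hD, eval_sub, a2, b2, sub_self]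
    have v1 : D.eval 1 = 0 := by rw [hD, eval_sub, a3, b3, sub_self]
    rw [e3] at v0 v1
    simp at v0 v1
    rw [v0, zero_add] at v1
    have : D = 0 := by rw [e3, v0, v1]; simp
    exact sub_eq_zero.1 this

open Polynomial in
/-- Explicit Lidstone polynomials through Bernoulli polynomials. -/
noncomputable def lidExpl (l : ℕ) : ℝ[X] :=
  C ((2 : ℝ) ^ (2 * l + 1) / (2 * l + 1).factorial) *
    ((Polynomial.bernoulli (2 * l + 1)).map (algebraMap ℚ ℝ)).comp (C 2⁻¹ * (1 + X))

open Polynomial in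
lemma deriv_bern_comp (k : ℕ) :
    derivative (((Polynomial.bernoulli (k + 1)).map (algebraMap ℚ ℝ)).comp (C 2⁻¹ * (1 + X))) =
      C ((k + 1 : ℝ) / 2) *
        ((Polynomial.bernoulli k).map (algebraMap ℚ ℝ)).comp (C 2⁻¹ * (1 + X)) := by
  have : (k + 1 : ℝ[X]) = C (k + 1 : ℝ) := by simp
  rw [derivative_comp, derivative_map, derivative_bernoulli_add_one]
  simp [Polynomial.map_mul]
  rw [this, div_eq_mul_inv, C_mul]
  ring

open Polynomial in
lemma lidExpl_deriv (l : ℕ) : derivative (lidExpl l) =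
    C ((2 : ℝ) ^ (2 * l) / (2 * l).factorial) *
    ((Polynomial.bernoulli (2 * l)).map (algebraMap ℚ ℝ)).comp (C 2⁻¹ * (1 + X)) := by
  rw [lidExpl, derivative_mul, deriv_bern_comp, derivative_C, zero_mul, zero_add, ← mul_assoc,
    ← C_mul]
  congr 2
  rw [Nat.factorial_succ]
  push_cast
  have : ((2 * l).factorial : ℝ) ≠ 0 := by positivity
  field_simp
  ring

open Polynomial in
lemma lidExpl_lidPoly : LidPoly lidExpl := by
  refine ⟨?_, fun l => ⟨?_, ?_, ?_⟩⟩
  · apply Polynomial.funext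
    intro r
    simp [lidExpl]
    ring
  · rw [lidExpl_deriv, show 2 * (l + 1) = 2 * l + 1 + 1 by ring, derivative_mul, deriv_bern_comp,
      derivative_C, zero_mul, zero_add, ← mul_assoc, ← C_mul, lidExpl]
    congr 2
    rw [Nat.factorial_succ (2 * l + 1)]
    push_cast
    have : ((2 * l + 1).factorial : ℝ) ≠ 0 := by positivity
    field_simp
    ring
  · have := bernoulliFun_eval_half_eq_zero (l + 1)
    rw [bernoulliFun] at this
    simp [lidExpl, this]
  · have := bernoulliFun_eval_one (2 * (l + 1) + 1)
    rw [bernoulliFun_eval_zero, bernoulli_eq_zero_of_odd (by simp) (by omega), bernoulliFun] at this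
    simp [lidExpl]
    right
    norm_num at this ⊢
    exact this

open Polynomial in
lemma LidPoly.deriv_diff {A : ℕ → ℝ[X]} (hA : LidPoly A) (m : ℕ) :
    (derivative (A m)).eval 0 - (derivative (A m)).eval 1 =
      - (2 * ((2 : ℝ) ^ (2 * m) - 1) * ((bernoulli (2 * m) : ℚ) : ℝ) / (2 * m).factorial) := by
  rw [hA.unique lidExpl_lidPoly, lidExpl_deriv]
  have h0 := bernoulliFun_eval_half (2 * m)
  have h1 := bernoulliFun_eval_one (2 * m)
  rw [if_neg (by omega), bernoulliFun_eval_zero] at h1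
  rw [bernoulliFun] at h0 h1
  simp only [eval_mul, eval_C, eval_comp, eval_add, eval_one, eval_X, add_zero, mul_one]
  rw [show (2⁻¹ : ℝ) * (1 + 1) = 1 by norm_num, h0, h1]
  have : ((2 * m).factorial : ℝ) ≠ 0 := by positivity
  field_simp
  ring

/-- Tangent line inequalities for a concave function vanishing at the endpoints. -/
lemma tangent_ineq {w w1 w2 : ℝ → ℝ} (hc : ContinuousOn w (Set.Icc 0 1))
    (h1 : ∀ t ∈ Set.Ioo (0 : ℝ) 1, HasDerivAt w (w1 t) t)
    (h2 : ∀ t ∈ Set.Ioo (0 : ℝ) 1, HasDerivAt w1 (w2 t) t)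
    (hn : ∀ t ∈ Set.Ioo (0 : ℝ) 1, w2 t ≤ 0) (h0 : w 0 = 0) (h1' : w 1 = 0)
    {t : ℝ} (ht : t ∈ Set.Ioo (0 : ℝ) 1) :
    t * w1 t ≤ w t ∧ 0 ≤ w t + (1 - t) * w1 t := by
  have hanti : AntitoneOn w1 (Set.Ioo 0 1) := by
    apply antitoneOn_of_hasDerivWithinAt_nonpos (f' := w2) (convex_Ioo 0 1)
    · exact fun s hs => (h2 s hs).continuousAt.continuousWithinAt
    · rw [interior_Ioo]; exact fun s hs => (h2 s hs).hasDerivWithinAt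
    · rw [interior_Ioo]; exact hn
  obtain ⟨t0, t1⟩ := ht
  constructor
  · obtain ⟨c, ⟨c0, c1⟩, hc'⟩ := exists_hasDerivAt_eq_slope w w1 t0
      (hc.mono (Set.Icc_subset_Icc le_rfl t1.le)) (fun s hs => h1 s ⟨hs.1, hs.2.trans t1⟩)
    have := hanti ⟨c0, c1.trans t1⟩ ⟨t0, t1⟩ c1.le
    rw [hc', h0, sub_zero, sub_zero, le_div_iff₀ t0] at this
    linarith
  · obtain ⟨c, ⟨c0, c1⟩, hc'⟩ := exists_hasDerivAt_eq_slope w w1 t1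
      (hc.mono (Set.Icc_subset_Icc t0.le le_rfl)) (fun s hs => h1 s ⟨t0.trans hs.1, hs.2⟩)
    have := hanti ⟨t0, t1⟩ ⟨t0.trans c0, c1⟩ c0.le
    rw [hc', h1', div_le_iff₀ (by linarith)] at this
    linarith

/-- Maximum principle. -/
lemma concave_nonneg {w w1 w2 : ℝ → ℝ} (hc : ContinuousOn w (Set.Icc 0 1))
    (h1 : ∀ t ∈ Set.Ioo (0 : ℝ) 1, HasDerivAt w (w1 t) t)
    (h2 : ∀ t ∈ Set.Ioo (0 : ℝ) 1, HasDerivAt w1 (w2 t) t)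
    (hn : ∀ t ∈ Set.Ioo (0 : ℝ) 1, w2 t ≤ 0) (h0 : w 0 = 0) (h1' : w 1 = 0)
    {t : ℝ} (ht : t ∈ Set.Ioo (0 : ℝ) 1) : 0 ≤ w t := by
  obtain ⟨a, b⟩ := tangent_ineq hc h1 h2 hn h0 h1' ht
  obtain ⟨t0, t1⟩ := ht
  nlinarith

open Polynomial in
/-- The comparison polynomials. -/
noncomputable def cmpPoly (A : ℕ → ℝ[X]) (j : ℕ) : ℝ[X] :=
  C ((-1 : ℝ) ^ j) * (A j + (A j).comp (1 - X))

open Polynomial in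
lemma cmpPoly_zero {A : ℕ → ℝ[X]} (hA : LidPoly A) : cmpPoly A 0 = 1 := by
  simp [cmpPoly, hA.1]

open Polynomial in
lemma cmpPoly_deriv (A : ℕ → ℝ[X]) (j : ℕ) : derivative (cmpPoly A j) =
    C ((-1 : ℝ) ^ j) * (derivative (A j) - (derivative (A j)).comp (1 - X)) := by
  rw [cmpPoly, derivative_mul, derivative_C, derivative_add, derivative_comp]
  simp
  ring

open Polynomial in
lemma cmpPoly_deriv2 {A : ℕ → ℝ[X]} (hA : LidPoly A) (j : ℕ) :
    derivative (derivative (cmpPoly A (j + 1))) = - cmpPoly A j := by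
  rw [cmpPoly_deriv, derivative_mul, derivative_C, derivative_sub, derivative_comp, (hA.2 j).1,
    cmpPoly]
  simp
  ring

open Polynomial in
lemma cmpPoly_ends {A : ℕ → ℝ[X]} (hA : LidPoly A) (j : ℕ) :
    (cmpPoly A (j + 1)).eval 0 = 0 ∧ (cmpPoly A (j + 1)).eval 1 = 0 := by
  obtain ⟨-, a, b⟩ := hA.2 j
  constructor <;> simp [cmpPoly, a, b]

open Polynomial in
lemma cmpPoly_deriv_one (A : ℕ → ℝ[X]) (j : ℕ) :
    (derivative (cmpPoly A j)).eval 1 = - (derivative (cmpPoly A j)).eval 0 := by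
  rw [cmpPoly_deriv]
  simp
  ring

open Polynomial in
lemma cmpPoly_nonneg {A : ℕ → ℝ[X]} (hA : LidPoly A) (j : ℕ) :
    ∀ t ∈ Set.Ioo (0 : ℝ) 1, 0 ≤ (cmpPoly A j).eval t := by
  induction j with
  | zero => intro t _; simp [cmpPoly_zero hA]
  | succ j ih =>
    intro t ht
    refine concave_nonneg (w := fun s => (cmpPoly A (j + 1)).eval s)
      (cmpPoly A (j + 1)).continuousOn
      (fun s _ => (cmpPoly A (j + 1)).hasDerivAt s)
      (fun s _ => (derivative (cmpPoly A (j + 1))).hasDerivAt s) ?_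
      (cmpPoly_ends hA j).1 (cmpPoly_ends hA j).2 ht
    intro s hs
    rw [cmpPoly_deriv2 hA, eval_neg]
    linarith [ih s hs]

/-- The hypotheses on the error function and its derivatives on the unit interval. -/
structure ErrSys (m : ℕ) (E : ℕ → ℝ → ℝ) (K : ℝ) : Prop where
  cont : ∀ j < 2 * m, ContinuousOn (E j) (Set.Icc 0 1)
  der : ∀ j < 2 * m, ∀ t ∈ Set.Ioo (0 : ℝ) 1, HasDerivAt (E j) (E (j + 1) t) t
  left : ∀ l < m, E (2 * l) 0 = 0
  right : ∀ l < m, E (2 * l) 1 = 0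
  bd : ∀ t ∈ Set.Ioo (0 : ℝ) 1, |E (2 * m) t| ≤ K

lemma ErrSys.shift {m : ℕ} {E : ℕ → ℝ → ℝ} {K : ℝ} (h : ErrSys (m + 1) E K) :
    ErrSys m (fun j => E (j + 2)) K where
  cont := fun j hj => h.cont (j + 2) (by omega)
  der := fun j hj => h.der (j + 2) (by omega)
  left := fun l hl => h.left (l + 1) (by omega)
  right := fun l hl => h.right (l + 1) (by omega)
  bd := h.bd

lemma ErrSys.neg {m : ℕ} {E : ℕ → ℝ → ℝ} {K : ℝ} (h : ErrSys m E K) :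
    ErrSys m (fun j t => - E j t) K where
  cont := fun j hj => (h.cont j hj).neg
  der := fun j hj t ht => (h.der j hj t ht).neg
  left := fun l hl => by simp [h.left l hl]
  right := fun l hl => by simp [h.right l hl]
  bd := fun t ht => by rw [abs_neg]; exact h.bd t ht

open Polynomial in
lemma ErrSys.tangent {A : ℕ → ℝ[X]} (hA : LidPoly A) {m : ℕ} {E : ℕ → ℝ → ℝ} {K : ℝ}
    (h : ErrSys (m + 1) E K)
    (hb : ∀ t ∈ Set.Ioo (0 : ℝ) 1, |E 2 t| ≤ K * (cmpPoly A m).eval t)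
    {t : ℝ} (ht : t ∈ Set.Ioo (0 : ℝ) 1) :
    t * (K * (derivative (cmpPoly A (m + 1))).eval t + E 1 t) ≤
        K * (cmpPoly A (m + 1)).eval t + E 0 t ∧
      0 ≤ (K * (cmpPoly A (m + 1)).eval t + E 0 t) +
        (1 - t) * (K * (derivative (cmpPoly A (m + 1))).eval t + E 1 t) := by
  refine tangent_ineq (w := fun s => K * (cmpPoly A (m + 1)).eval s + E 0 s)
    (w1 := fun s => K * (derivative (cmpPoly A (m + 1))).eval s + E 1 s)
    (w2 := fun s => K * (derivative (derivative (cmpPoly A (m + 1)))).eval s + E 2 s)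
    ?_ ?_ ?_ ?_ ?_ ?_ ht
  · exact ((cmpPoly A (m + 1)).continuousOn.const_mul K).add (h.cont 0 (by omega))
  · exact fun s hs => (((cmpPoly A (m + 1)).hasDerivAt s).const_mul K).add
      (h.der 0 (by omega) s hs)
  · exact fun s hs => (((derivative (cmpPoly A (m + 1))).hasDerivAt s).const_mul K).add
      (h.der 1 (by omega) s hs)
  · intro s hs
    rw [cmpPoly_deriv2 hA, eval_neg]
    linarith [(abs_le.1 (hb s hs)).2]
  · have := h.left 0 (by omega)
    simp at this
    simp [(cmpPoly_ends hA m).1, this]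
  · have := h.right 0 (by omega)
    simp at this
    simp [(cmpPoly_ends hA m).2, this]

open Polynomial in
lemma ErrSys.le {A : ℕ → ℝ[X]} (hA : LidPoly A) {m : ℕ} {E : ℕ → ℝ → ℝ} {K : ℝ}
    (h : ErrSys m E K) : ∀ t ∈ Set.Ioo (0 : ℝ) 1, |E 0 t| ≤ K * (cmpPoly A m).eval t := by
  induction m generalizing E with
  | zero =>
    intro t ht
    simpa [cmpPoly_zero hA] using h.bd t ht
  | succ m ih =>
    intro t ht
    have hb := ih h.shift
    obtain ⟨a, b⟩ := h.tangent hA hb ht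
    obtain ⟨c, d⟩ := h.neg.tangent hA (fun s hs => by rw [abs_neg]; exact hb s hs) ht
    obtain ⟨t0, t1⟩ := ht
    rw [abs_le]
    constructor <;> nlinarith

open Polynomial in
lemma cmpPoly_bound {A : ℕ → ℝ[X]} (hA : LidPoly A) (m : ℕ) {t : ℝ}
    (ht : t ∈ Set.Ioo (0 : ℝ) 1) :
    2 * (cmpPoly A (m + 1)).eval t + (1 - 2 * t) * (derivative (cmpPoly A (m + 1))).eval t ≤
      (derivative (cmpPoly A (m + 1))).eval 0 := by
  set q := cmpPoly A (m + 1) with hq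
  set R : ℝ[X] := C 2 * q + (1 - C 2 * X) * derivative q with hR
  have hRd : ∀ s, (derivative R).eval s = - ((1 - 2 * s) * (cmpPoly A m).eval s) := by
    intro s
    rw [hR]
    simp only [derivative_add, derivative_mul, derivative_C, derivative_sub, derivative_one,
      derivative_X, hq, cmpPoly_deriv2 hA]
    simp
  have hRe : ∀ s, R.eval s = 2 * q.eval s + (1 - 2 * s) * (derivative q).eval s := by
    intro s; simp [hR]
  rw [← hRe]
  have h0 : R.eval 0 = (derivative q).eval 0 := by
    rw [hRe, (cmpPoly_ends hA m).1]; ring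
  have h1 : R.eval 1 = (derivative q).eval 0 := by
    rw [hRe, (cmpPoly_ends hA m).2, hq, cmpPoly_deriv_one]; ring
  have ht0 := ht.1
  have ht1 := ht.2
  rcases le_total t (1 / 2) with hl | hl
  · rw [← h0]
    refine antitoneOn_of_hasDerivWithinAt_nonpos (f := fun s => R.eval s)
      (f' := fun s => (derivative R).eval s) (convex_Icc 0 (1 / 2)) R.continuousOn
      (fun s _ => (R.hasDerivAt s).hasDerivWithinAt) ?_ ⟨le_rfl, by norm_num⟩ ⟨ht.1.le, hl⟩ ht.1.le
    rw [interior_Icc]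
    rintro s ⟨s0, s1⟩
    rw [hRd]
    have := cmpPoly_nonneg hA m s ⟨s0, by linarith⟩
    have : 0 ≤ (1 - 2 * s) * (cmpPoly A m).eval s := mul_nonneg (by linarith) this
    linarith
  · rw [← h1]
    refine monotoneOn_of_hasDerivWithinAt_nonneg (f := fun s => R.eval s)
      (f' := fun s => (derivative R).eval s) (convex_Icc (1 / 2) 1) R.continuousOn
      (fun s _ => (R.hasDerivAt s).hasDerivWithinAt) ?_ ⟨hl, ht.2.le⟩ ⟨by norm_num, le_rfl⟩ ht.2.le
    rw [interior_Icc]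
    rintro s ⟨s0, s1⟩
    rw [hRd]
    have := cmpPoly_nonneg hA m s ⟨by linarith, s1⟩
    have : 0 ≤ (2 * s - 1) * (cmpPoly A m).eval s := mul_nonneg (by linarith) this
    linarith

open Polynomial in
lemma ErrSys.deriv_le {A : ℕ → ℝ[X]} (hA : LidPoly A) {m : ℕ} {E : ℕ → ℝ → ℝ} {K : ℝ}
    (hK : 0 ≤ K) (h : ErrSys (m + 1) E K) {t : ℝ} (ht : t ∈ Set.Ioo (0 : ℝ) 1) :
    |E 1 t| ≤ K * (derivative (cmpPoly A (m + 1))).eval 0 := by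
  have hb := h.shift.le hA
  obtain ⟨a, b⟩ := h.tangent hA hb ht
  obtain ⟨c, d⟩ := h.neg.tangent hA (fun s hs => by rw [abs_neg]; exact hb s hs) ht
  have := mul_le_mul_of_nonneg_left (cmpPoly_bound hA m ht) hK
  rw [abs_le]
  constructor <;> linarith

open Polynomial in
lemma cmpPoly_deriv_zero {A : ℕ → ℝ[X]} (hA : LidPoly A) (m : ℕ) :
    (derivative (cmpPoly A m)).eval 0 = (-1 : ℝ) ^ (m + 1) * (2 * ((2 : ℝ) ^ (2 * m) - 1)) *
      ((bernoulli (2 * m) : ℚ) : ℝ) / (2 * m).factorial := by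
  have := hA.deriv_diff m
  rw [cmpPoly_deriv]
  simp only [eval_mul, eval_C, eval_sub, eval_comp, eval_one, eval_X, sub_zero]
  rw [this]
  ring

/-- The bound on an arbitrary interval. -/
lemma interval_bound {Λ : ℕ → ℝ → ℝ} (hΛ : LidstoneProp Λ) {m : ℕ} (hm : 1 ≤ m)
    {E : ℕ → ℝ → ℝ} {K a b : ℝ} (hab : a < b)
    (cont : ∀ j < 2 * m, ContinuousOn (E j) (Set.Icc a b))
    (der : ∀ j < 2 * m, ∀ t ∈ Set.Ioo a b, HasDerivAt (E j) (E (j + 1) t) t)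
    (left : ∀ l < m, E (2 * l) a = 0) (right : ∀ l < m, E (2 * l) b = 0)
    (bd : ∀ t ∈ Set.Ioo a b, |E (2 * m) t| ≤ K) (hK : 0 ≤ K) {t : ℝ} (ht : t ∈ Set.Ioo a b) :
    |E 1 t| ≤ ((-1 : ℝ) ^ (m + 1) * (2 * ((2 : ℝ) ^ (2 * m) - 1)) *
      ((bernoulli (2 * m) : ℚ) : ℝ) / (2 * m).factorial) * K * (b - a) ^ (2 * m - 1) ∧
    0 ≤ ((-1 : ℝ) ^ (m + 1) * (2 * ((2 : ℝ) ^ (2 * m) - 1)) *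
      ((bernoulli (2 * m) : ℚ) : ℝ) / (2 * m).factorial) := by
  obtain ⟨A, hA, -⟩ := hΛ.exists_poly
  obtain ⟨m, rfl⟩ : ∃ k, m = k + 1 := ⟨m - 1, by omega⟩
  set h := b - a with hh
  have hpos : 0 < h := by linarith
  have maps : ∀ s ∈ Set.Icc (0 : ℝ) 1, a + h * s ∈ Set.Icc a b := by
    rintro s ⟨s0, s1⟩
    constructor <;> nlinarith
  have maps' : ∀ s ∈ Set.Ioo (0 : ℝ) 1, a + h * s ∈ Set.Ioo a b := by
    rintro s ⟨s0, s1⟩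
    constructor <;> nlinarith
  have S : ErrSys (m + 1) (fun j s => h ^ j * E j (a + h * s)) (h ^ (2 * (m + 1)) * K) := by
    refine ⟨?_, ?_, ?_, ?_, ?_⟩
    · intro j hj
      exact ((cont j hj).comp (by fun_prop) maps).const_mul _
    · intro j hj s hs
      have e : HasDerivAt (fun s => a + h * s) h s := by
        simpa using ((hasDerivAt_id s).const_mul h).const_add a
      have := ((der j hj _ (maps' s hs)).comp s e).const_mul (h ^ j)
      exact this.congr_deriv (by ring)
    · intro l hl; simp [left l hl]
    · intro l hl
      simp [hh, right l hl]
    · intro s hs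
      rw [abs_mul, abs_of_pos (by positivity)]
      exact mul_le_mul_of_nonneg_left (bd _ (maps' s hs)) (by positivity)
  have hs : (t - a) / h ∈ Set.Ioo (0 : ℝ) 1 := by
    constructor
    · exact div_pos (by linarith [ht.1]) hpos
    · rw [div_lt_one hpos]; linarith [ht.2]
  have key := S.deriv_le hA (by positivity) hs
  rw [cmpPoly_deriv_zero hA] at key
  constructor
  · have e : a + h * ((t - a) / h) = t := by field_simp; ring
    simp only [e, pow_one, abs_mul, abs_of_pos hpos] at key
    rw [show 2 * (m + 1) - 1 = 2 * m + 1 by omega]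
    refine le_of_mul_le_mul_left (key.trans (le_of_eq ?_)) hpos
    ring
  · have Z : ErrSys (m + 1) (fun _ _ => 0) 1 := by
      refine ⟨fun _ _ => continuousOn_const, fun _ _ t _ => hasDerivAt_const t 0, ?_, ?_, ?_⟩ <;>
        simp
    have := Z.deriv_le hA zero_le_one hs
    rw [cmpPoly_deriv_zero hA] at this
    simpa using this

open Polynomial in
/-- The Lidstone interpolation polynomial on `[a, b]`. -/
noncomputable def lidQ (A : ℕ → ℝ[X]) (a b : ℝ) (c d : ℕ → ℝ) (p : ℕ) : ℝ[X] :=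
  ∑ l ∈ Finset.range (p + 1), C ((b - a) ^ (2 * l)) *
    (C (c l) * (A l).comp (C (b - a)⁻¹ * (C b - X)) +
      C (d l) * (A l).comp (C (b - a)⁻¹ * (X - C a)))

open Polynomial in
lemma lidQ_deriv2 {A : ℕ → ℝ[X]} (hA : LidPoly A) {a b : ℝ} (hab : a < b) (c d : ℕ → ℝ) (p : ℕ) :
    derivative (derivative (lidQ A a b c d (p + 1))) =
      lidQ A a b (fun l => c (l + 1)) (fun l => d (l + 1)) p := by
  have hne : b - a ≠ 0 := by linarith
  rw [lidQ, Finset.sum_range_succ', lidQ, derivative_add, derivative_add, derivative_sum,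
    derivative_sum]
  have h0 : derivative (derivative (C ((b - a) ^ (2 * 0)) *
    (C (c 0) * (A 0).comp (C (b - a)⁻¹ * (C b - X)) +
      C (d 0) * (A 0).comp (C (b - a)⁻¹ * (X - C a))))) = 0 := by
    simp [hA.1]
  rw [h0, add_zero]
  refine Finset.sum_congr rfl fun l _ => ?_
  have e : (C ((b - a) ^ (2 * (l + 1))) : ℝ[X]) * C (b - a)⁻¹ ^ 2 = C ((b - a) ^ (2 * l)) := by
    rw [← C_pow, ← C_mul]; congr 1; field_simp; ring
  have k1 : derivative (derivative ((A (l + 1)).comp (C (b - a)⁻¹ * (C b - X)))) =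
      C (b - a)⁻¹ ^ 2 * (A l).comp (C (b - a)⁻¹ * (C b - X)) := by
    rw [derivative_comp, derivative_mul (f := derivative _), derivative_comp, (hA.2 l).1]
    simp only [derivative_mul, derivative_C, derivative_sub, derivative_X]
    simp
    ring
  have k2 : derivative (derivative ((A (l + 1)).comp (C (b - a)⁻¹ * (X - C a)))) =
      C (b - a)⁻¹ ^ 2 * (A l).comp (C (b - a)⁻¹ * (X - C a)) := by
    rw [derivative_comp, derivative_mul (f := derivative _), derivative_comp, (hA.2 l).1]
    simp only [derivative_mul, derivative_C, derivative_sub, derivative_X]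
    simp
    ring
  rw [derivative_C_mul, derivative_C_mul, derivative_add, derivative_add, derivative_C_mul,
    derivative_C_mul, derivative_C_mul, derivative_C_mul, k1, k2, ← e]
  ring

open Polynomial in
lemma lidQ_iter {A : ℕ → ℝ[X]} (hA : LidPoly A) {a b : ℝ} (hab : a < b) (j : ℕ) :
    ∀ (c d : ℕ → ℝ) (r : ℕ), derivative^[2 * j] (lidQ A a b c d (r + j)) =
      lidQ A a b (fun l => c (l + j)) (fun l => d (l + j)) r := by
  induction j with
  | zero => intro c d r; simp
  | succ j ih =>
    intro c d r
    rw [show 2 * (j + 1) = 2 * j + 1 + 1 by ring, Function.iterate_succ_apply,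
      Function.iterate_succ_apply, ← add_assoc, lidQ_deriv2 hA hab, ih]
    simp only [add_assoc]

open Polynomial in
lemma lidQ_eval {A : ℕ → ℝ[X]} (hA : LidPoly A) {a b : ℝ} (hab : a < b) (c d : ℕ → ℝ) (p : ℕ) :
    (lidQ A a b c d p).eval a = c 0 ∧ (lidQ A a b c d p).eval b = d 0 := by
  have hne : b - a ≠ 0 := by linarith
  constructor
  all_goals
    rw [lidQ, Finset.sum_range_succ', eval_add, eval_finsetSum, Finset.sum_eq_zero]
    · simp [hA.1, inv_mul_cancel₀ hne]
    · intro l _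
      simp [inv_mul_cancel₀ hne, (hA.2 l).2.1, (hA.2 l).2.2]

open Polynomial in
lemma lidQ_zero_eval {A : ℕ → ℝ[X]} (hA : LidPoly A) {a b : ℝ} (c d : ℕ → ℝ) (t : ℝ) :
    (lidQ A a b c d 0).eval t = c 0 * ((b - a)⁻¹ * (b - t)) + d 0 * ((b - a)⁻¹ * (t - a)) := by
  simp [lidQ, hA.1]

open Polynomial in
lemma piece_bound {Λ : ℕ → ℝ → ℝ} (hΛ : LidstoneProp Λ) {m i : ℕ} (hm : 1 ≤ m)
    {u v a b : ℝ} (hab : a < b) (hua : u ≤ a) (hbv : b ≤ v) {g Lg : ℝ → ℝ}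
    (hg : ContDiffOn ℝ ((2 * (m + i) : ℕ) : WithTop ℕ∞) g (Set.Icc u v))
    (hLg : ∀ t ∈ Set.Icc a b,
      Lg t = ∑ l ∈ Finset.range (m + i + 1),
        (iteratedDerivWithin (2 * l) g (Set.Icc u v) a * Λ l ((b - t) / (b - a)) +
          iteratedDerivWithin (2 * l) g (Set.Icc u v) b * Λ l ((t - a) / (b - a))) *
          (b - a) ^ (2 * l))
    {M : ℝ} (hM : ∀ t ∈ Set.Icc u v, |iteratedDerivWithin (2 * (m + i)) g (Set.Icc u v) t| ≤ M)
    {t : ℝ} (ht : t ∈ Set.Ioo a b) :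
    |iteratedDerivWithin (2 * i + 1) (fun s => g s - Lg s) (Set.Icc u v) t| ≤
      ((-1 : ℝ) ^ (m + 1) * (2 * ((2 : ℝ) ^ (2 * m) - 1)) *
      ((bernoulli (2 * m) : ℚ) : ℝ) / (2 * m).factorial) * (2 * M) * (b - a) ^ (2 * m - 1) ∧
    0 ≤ ((-1 : ℝ) ^ (m + 1) * (2 * ((2 : ℝ) ^ (2 * m) - 1)) *
      ((bernoulli (2 * m) : ℚ) : ℝ) / (2 * m).factorial) := by
  obtain ⟨A, hA, hAΛ⟩ := hΛ.exists_poly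
  have hne : b - a ≠ 0 := by linarith
  have huv : u < v := by linarith
  have hud : UniqueDiffOn ℝ (Set.Icc u v) := uniqueDiffOn_Icc huv
  set G : ℕ → ℝ → ℝ := fun j => iteratedDerivWithin j g (Set.Icc u v) with hG
  set Q : ℝ[X] := lidQ A a b (fun l => G (2 * l) a) (fun l => G (2 * l) b) (m + i) with hQ
  have hLQ : ∀ s ∈ Set.Icc a b, Lg s = Q.eval s := by
    intro s hs
    rw [hLg s hs, hQ, lidQ, eval_finsetSum]
    refine Finset.sum_congr rfl fun l _ => ?_
    simp only [hAΛ, hG, eval_mul, eval_C, eval_add, eval_comp, eval_sub, eval_X]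
    rw [div_eq_inv_mul, div_eq_inv_mul]
    ring
  have hGc : ∀ j ≤ 2 * (m + i), ContinuousOn (G j) (Set.Icc a b) := by
    intro j hj
    exact (hg.continuousOn_iteratedDerivWithin (by exact_mod_cast hj) hud).mono
      (Set.Icc_subset_Icc hua hbv)
  have hnhds : ∀ s ∈ Set.Ioo a b, Set.Icc u v ∈ nhds s := fun s hs =>
    Icc_mem_nhds (hua.trans_lt hs.1) (hs.2.trans_le hbv)
  have hGd : ∀ j < 2 * (m + i), ∀ s ∈ Set.Ioo a b, HasDerivAt (G j) (G (j + 1) s) s := by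
    intro j hj s hs
    have := hg.differentiableOn_iteratedDerivWithin (m := j) (by exact_mod_cast hj) hud s
      (mem_of_mem_nhds (hnhds s hs))
    have h2 := this.hasDerivWithinAt.hasDerivAt (hnhds s hs)
    rw [← iteratedDerivWithin_succ] at h2
    exact h2
  set F : ℕ → ℝ → ℝ := fun j s => G j s - (derivative^[j] Q).eval s with hF
  have hFd : ∀ j < 2 * (m + i), ∀ s ∈ Set.Ioo a b, HasDerivAt (F j) (F (j + 1) s) s := by
    intro j hj s hs
    have := (hGd j hj s hs).sub ((derivative^[j] Q).hasDerivAt s)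
    rw [← Function.iterate_succ_apply' derivative] at this
    exact this
  have hFe : ∀ k ≤ 2 * (m + i), ∀ s ∈ Set.Ioo a b,
      iteratedDerivWithin k (fun s => g s - Lg s) (Set.Icc u v) s = F k s := by
    intro k
    induction k with
    | zero =>
      intro _ s hs
      simp [hF, hG, hLQ s (Set.Ioo_subset_Icc_self hs)]
    | succ k ih =>
      intro hk s hs
      rw [iteratedDerivWithin_succ]
      have h1 := hFd k (by omega) s hs
      have h2 : iteratedDerivWithin k (fun s => g s - Lg s) (Set.Icc u v) =ᶠ[nhds s] F k := by
        filter_upwards [Ioo_mem_nhds hs.1 hs.2] with r hr using ih (by omega) r hr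
      exact (h1.congr_of_eventuallyEq h2).hasDerivWithinAt.derivWithin
        (hud s (mem_of_mem_nhds (hnhds s hs)))
  rw [hFe (2 * i + 1) (by omega) t ht]
  have hEnds : ∀ l < m, F (2 * (i + l)) a = 0 ∧ F (2 * (i + l)) b = 0 := by
    intro l hl
    have e : derivative^[2 * (i + l)] Q = lidQ A a b (fun k => G (2 * (k + (i + l))) a)
        (fun k => G (2 * (k + (i + l))) b) (m - l) := by
      have := lidQ_iter hA hab (i + l) (fun l => G (2 * l) a) (fun l => G (2 * l) b) (m - l)
      rwa [show m - l + (i + l) = m + i by omega] at this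
    have := lidQ_eval hA hab (fun k => G (2 * (k + (i + l))) a) (fun k => G (2 * (k + (i + l))) b)
      (m - l)
    simp only [hF, e]
    rw [this.1, this.2]
    simp
  have hab' : ∀ s ∈ Set.Icc a b, s ∈ Set.Icc u v := fun s hs =>
    Set.Icc_subset_Icc hua hbv hs
  have hMa := hM a (hab' a ⟨le_rfl, hab.le⟩)
  have hMb := hM b (hab' b ⟨hab.le, le_rfl⟩)
  have hM0 : 0 ≤ M := (abs_nonneg _).trans hMa
  refine interval_bound hΛ hm (E := fun j => F (2 * i + j)) (K := 2 * M) hab ?_ ?_ ?_ ?_ ?_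
    (by linarith) ht
  · intro j hj
    exact (hGc _ (by omega)).sub (derivative^[2 * i + j] Q).continuousOn
  · intro j hj
    exact hFd (2 * i + j) (by omega)
  · intro l hl
    rw [← mul_add]; exact (hEnds l hl).1
  · intro l hl
    rw [← mul_add]; exact (hEnds l hl).2
  · intro s hs
    have e : derivative^[2 * (m + i)] Q = lidQ A a b (fun k => G (2 * (k + (m + i))) a)
        (fun k => G (2 * (k + (m + i))) b) 0 := by
      have := lidQ_iter hA hab (m + i) (fun l => G (2 * l) a) (fun l => G (2 * l) b) 0
      rwa [zero_add] at this
    have hMs := hM s (hab' s (Set.Ioo_subset_Icc_self hs))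
    show |F (2 * i + 2 * m) s| ≤ 2 * M
    rw [show 2 * i + 2 * m = 2 * (m + i) by ring]
    simp only [hF, e]
    rw [lidQ_zero_eval hA]
    simp only [zero_add]
    set α := (b - a)⁻¹ * (b - s)
    set β := (b - a)⁻¹ * (s - a)
    have hpos : 0 < (b - a)⁻¹ := inv_pos.2 (by linarith)
    have hα : 0 ≤ α := mul_nonneg hpos.le (by linarith [hs.2])
    have hβ : 0 ≤ β := mul_nonneg hpos.le (by linarith [hs.1])
    have hαβ : α + β = 1 := by
      simp only [α, β]; field_simp; ring
    rw [abs_le] at hMa hMb hMs ⊢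
    simp only [hG]
    have i1 := mul_le_mul_of_nonneg_right hMa.1 hα
    have i2 := mul_le_mul_of_nonneg_right hMa.2 hα
    have i3 := mul_le_mul_of_nonneg_right hMb.1 hβ
    have i4 := mul_le_mul_of_nonneg_right hMb.2 hβ
    have i5 : M * α + M * β = M := by rw [← mul_add, hαβ, mul_one]
    constructor <;> linarith [hMs.1, hMs.2]

/-- For `p ≥ 1` and odd `k = 2i+1` with `0 ≤ i ≤ p-1`, the piecewise Lidstone
interpolant `Lg` of a `2p`-times continuously differentiable function `g` satisfies
`|(g - Lg)^(k)| ≤ 2 d ‖g^(2p)‖_∞ ‖Δ‖^(2p-k)` on every open subinterval, where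
`d = (-1)^(p-i+1) · 2(2^(2p-2i) - 1) · B_(2p-2i) / (2p-2i)!` with `B_m` the `m`-th
Bernoulli number, `M = ‖g^(2p)‖_∞` and `δ = ‖Δ‖` is the mesh of the partition. -/
theorem piecewise_lidstone_interpolation_error_odd (Λ : ℕ → ℝ → ℝ) (hΛ : LidstoneProp Λ)
    (p i : ℕ) (hp : 1 ≤ p) (hi : i ≤ p - 1)
    (N : ℕ) (hN : 1 ≤ N) (x : ℕ → ℝ) (hx : ∀ n < N, x n < x (n + 1))
    (g Lg : ℝ → ℝ)
    (hg : ContDiffOn ℝ (2 * p) g (Set.Icc (x 0) (x N)))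
    (hLg : ∀ n, 1 ≤ n → n ≤ N → ∀ t ∈ Set.Icc (x (n - 1)) (x n),
      Lg t = ∑ l ∈ Finset.range (p + 1),
        (iteratedDerivWithin (2 * l) g (Set.Icc (x 0) (x N)) (x (n - 1)) *
            Λ l ((x n - t) / (x n - x (n - 1))) +
          iteratedDerivWithin (2 * l) g (Set.Icc (x 0) (x N)) (x n) *
            Λ l ((t - x (n - 1)) / (x n - x (n - 1)))) *
          (x n - x (n - 1)) ^ (2 * l))
    (M δ : ℝ)
    (hM : IsLUB ((fun t => |iteratedDerivWithin (2 * p) g (Set.Icc (x 0) (x N)) t|) ''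
      Set.Icc (x 0) (x N)) M)
    (hδ : IsGreatest {d : ℝ | ∃ n, 1 ≤ n ∧ n ≤ N ∧ d = x n - x (n - 1)} δ) :
    ∀ n, 1 ≤ n → n ≤ N → ∀ t ∈ Set.Ioo (x (n - 1)) (x n),
      |iteratedDerivWithin (2 * i + 1) (fun s => g s - Lg s) (Set.Icc (x 0) (x N)) t| ≤
        2 * ((-1 : ℝ) ^ (p - i + 1) * (2 * ((2 : ℝ) ^ (2 * p - 2 * i) - 1)) *
            ((bernoulli (2 * p - 2 * i) : ℚ) : ℝ) / (Nat.factorial (2 * p - 2 * i))) *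
          M * δ ^ (2 * p - (2 * i + 1)) := by
  have mono : ∀ k n, n + k ≤ N → x n ≤ x (n + k) := by
    intro k
    induction k with
    | zero => intro n _; exact le_rfl
    | succ k ih =>
      intro n hn
      exact (ih n (by omega)).trans (hx (n + k) (by omega)).le
  intro n hn1 hnN t ht
  obtain ⟨m, rfl⟩ : ∃ m, p = m + i := ⟨p - i, by omega⟩
  have hm : 1 ≤ m := by omega
  have hab : x (n - 1) < x n := by
    have := hx (n - 1) (by omega)
    rwa [Nat.sub_add_cancel hn1] at this
  have hua : x 0 ≤ x (n - 1) := by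
    have := mono (n - 1) 0 (by omega)
    rwa [zero_add] at this
  have hbv : x n ≤ x N := by
    have := mono (N - n) n (by omega)
    rwa [show n + (N - n) = N by omega] at this
  have hMb : ∀ t ∈ Set.Icc (x 0) (x N),
      |iteratedDerivWithin (2 * (m + i)) g (Set.Icc (x 0) (x N)) t| ≤ M :=
    fun t ht => hM.1 ⟨t, ht, rfl⟩
  have hM0 : 0 ≤ M := (abs_nonneg _).trans (hMb (x n) ⟨hua.trans hab.le, hbv⟩)
  obtain ⟨h1, h2⟩ := piece_bound hΛ (i := i) hm hab hua hbv (by exact_mod_cast hg)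
    (hLg n hn1 hnN) hMb ht
  rw [show 2 * (m + i) - 2 * i = 2 * m by omega, show 2 * (m + i) - (2 * i + 1) = 2 * m - 1 by omega,
    show m + i - i = m by omega]
  refine h1.trans ?_
  have hle : x n - x (n - 1) ≤ δ := hδ.2 ⟨n, hn1, hnN, rfl⟩
  have hpow := pow_le_pow_left₀ (by linarith : (0 : ℝ) ≤ x n - x (n - 1)) hle (2 * m - 1)
  refine (mul_le_mul_of_nonneg_left hpow (mul_nonneg h2 (by linarith))).trans (le_of_eq ?_)
  ring
end

section
/- Fix integers p ≥ 1 and N ≥ 1, a partition x_0 < x_1 < ⋯ < x_N, and data y_{n,2k} ∈ ℝ (0 ≤ n ≤ N, 0 ≤ k ≤ p). Let α ∈ Θ_{2p}, let ℓ_α be a continuous function on [x_0,x_N] satisfying ℓ_α(L_n(x)) = α_n ℓ_α(x) + q_n(α_n, x) for all x ∈ [x_0,x_N] and 1 ≤ n ≤ N, and let φ be the classical Lidstone interpolation function for the data. Then ‖ℓ_α − φ‖_∞ ≤ (|α|_∞ / (1 − |α|_∞)) · (‖φ‖_∞ + M_{0,2p}), where |α|_∞ = max_n |α_n|, ‖·‖_∞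 denotes the supremum norm over [x_0,x_N], and M_{0,2p} = (2ρπ/3) Σ_{l=0}^{p} ((x_N − x_0)/π)^{2l}. -/
open Polynomial

lemma aux_deriv (R : ℝ[X]) (k : ℕ) :
    iteratedDeriv k (fun t => R.eval t) = fun t => ((derivative^[k]) R).eval t := by
  induction k with
  | zero => simp
  | succ k ih =>
    rw [iteratedDeriv_succ, ih]
    funext t
    rw [Polynomial.deriv, Function.iterate_succ_apply']

lemma aux_lin (R : ℝ[X]) (h : derivative (derivative R) = 0) (a b : ℝ) (hab : a ≠ b)
    (ha : R.eval a = 0) (hb : R.eval b = 0) : R = 0 := by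
  have h1 := derivative_eq_zero.1 h
  obtain ⟨c, hc⟩ := natDegree_eq_zero.mp h1
  have h2 : derivative (R - C c * X) = 0 := by simp [← hc]
  obtain ⟨d, hd⟩ := natDegree_eq_zero.mp (derivative_eq_zero.1 h2)
  have hR : R = C d + C c * X := by rw [hd]; ring
  rw [hR] at ha hb
  simp at ha hb
  have : c * (a - b) = 0 := by linarith
  have hc0 : c = 0 := by
    rcases mul_eq_zero.mp this with h | h
    · exact h
    · exact absurd (sub_eq_zero.mp h) hab
  subst hc0
  have : d = 0 := by linarith
  rw [hR, this]; simp

lemma aux_repr (P : ℕ → ℝ[X]) (h0 : P 0 = X)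
    (hd : ∀ l, derivative (derivative (P (l+1))) = P l)
    (hz : ∀ l, (P (l+1)).eval 0 = 0) (ho : ∀ l, (P (l+1)).eval 1 = 0)
    (a b : ℝ) (hab : a < b) (p : ℕ) : ∀ (R : ℝ[X]), derivative^[2*p+2] R = 0 →
    R = ∑ l ∈ Finset.range (p+1),
      (C ((derivative^[2*l] R).eval a) * (P l).comp (C (-1/(b-a)) * X + C (b/(b-a)))
      + C ((derivative^[2*l] R).eval b) * (P l).comp (C (1/(b-a)) * X + C (-a/(b-a))))
        * C ((b-a)^(2*l)) := by
  have hne : b - a ≠ 0 := by linarith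
  have e1 : -1/(b-a)*a + b/(b-a) = 1 := by field_simp; ring
  have e2 : -1/(b-a)*b + b/(b-a) = 0 := by field_simp; ring
  have e3 : 1/(b-a)*a + -a/(b-a) = 0 := by field_simp; ring
  have e4 : 1/(b-a)*b + -a/(b-a) = 1 := by field_simp; ring
  have e5 : (b-a)⁻¹*a + -a/(b-a) = 0 := by rw [← one_div]; exact e3
  have e6 : (b-a)⁻¹*b + -a/(b-a) = 1 := by rw [← one_div]; exact e4
  induction p with
  | zero =>
    intro R hR
    rw [← sub_eq_zero]
    apply aux_lin _ _ a b hab.ne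
    · simp [h0, e1, e5]
    · simp [h0, e2, e6]
    · simp only [mul_zero, zero_add, Function.iterate_succ, Function.iterate_zero, Function.comp, id] at hR
      simp [h0, hR]
  | succ p ih =>
    intro R hR
    have hR' : derivative^[2*p+2] (derivative (derivative R)) = 0 := by
      rw [← hR]; rfl
    have := ih _ hR'
    rw [← sub_eq_zero]
    apply aux_lin _ _ a b hab.ne
    · rw [Finset.sum_range_succ']
      simp [eval_finsetSum, h0, e1, e5, hz, ho]
    · rw [Finset.sum_range_succ']
      simp [eval_finsetSum, h0, e2, e6, hz, ho]
    · rw [Finset.sum_range_succ', derivative_sub, derivative_sub, sub_eq_zero]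
      refine this.trans ?_
      have hd2 : ∀ l (u v : ℝ), derivative (derivative ((P (l+1)).comp (C u * X + C v))) =
          C (u^2) * (P l).comp (C u * X + C v) := by
        intro l u v
        simp [derivative_comp, hd, ]
        ring
      simp only [derivative_add, derivative_sum, derivative_mul, derivative_C, zero_mul, mul_zero, add_zero, zero_add, hd2]
      simp only [h0, X_comp, derivative_add, derivative_mul, derivative_C, derivative_X, zero_mul, mul_zero, add_zero, zero_add, mul_one]
      apply Finset.sum_congr rfl
      intro l _
      have i1 : derivative^[2*(l+1)] R = derivative^[2*l] (derivative (derivative R)) := rfl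
      rw [i1]
      have j1 : (C ((b-a)^(2*l)) : ℝ[X]) = C ((-1/(b-a))^2) * C ((b-a)^(2*(l+1))) := by
        rw [← C_mul]; congr 1; field_simp; ring
      have j2 : (C ((-1/(b-a))^2) : ℝ[X]) = C ((1/(b-a))^2) := by
        congr 1; ring
      rw [j1, j2]; ring

lemma aux_conc (f f' f'' : ℝ → ℝ) (h1 : ∀ x, HasDerivAt f (f' x) x)
    (h2 : ∀ x, HasDerivAt f' (f'' x) x) (h3 : ∀ x ∈ Set.Icc (0:ℝ) 1, f'' x ≤ 0)
    (h0 : f 0 = 0) (h4 : f 1 = 0) : ∀ x ∈ Set.Icc (0:ℝ) 1, 0 ≤ f x := by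
  intro x hx
  have hc : ConcaveOn ℝ (Set.Icc (0:ℝ) 1) f := by
    apply concaveOn_of_hasDerivWithinAt2_nonpos (convex_Icc 0 1) (f' := f') (f'' := f'')
    · exact fun y _ => (h1 y).continuousAt.continuousWithinAt
    · exact fun y _ => (h1 y).hasDerivWithinAt
    · exact fun y _ => (h2 y).hasDerivWithinAt
    · exact fun y hy => h3 y (interior_subset hy)
  have := hc.min_le_of_mem_Icc (by simp) (by simp) hx
  simpa [h0, h4] using this

lemma aux_sin_half (s : ℝ) (h0 : 0 ≤ s) (h1 : s ≤ 1/2) :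
    s * (1 - s) / 2 ≤ (2 * Real.pi / 3) * Real.sin (Real.pi * s) / Real.pi^2 := by
  have hpi := Real.pi_pos
  have hp3 := Real.pi_gt_three
  have hp4 := Real.pi_lt_d2
  rcases h0.eq_or_lt with rfl | h0
  · simp
  set u := Real.pi * s / 2 with hu
  have hu0 : 0 < u := by positivity
  have hu1 : u ≤ 0.7875 := by rw [hu]; nlinarith
  have hs := (Real.sin_gt_sub_cube hu0).le
  have hc := Real.one_sub_sq_div_two_le_cos (x := u)
  have e : Real.pi * s = 2 * u := by rw [hu]; ring
  have hsu : 0.63 * u ≤ s := by rw [hu]; nlinarith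
  have key : 3/2 * u * (1 - s) ≤ Real.sin (Real.pi * s) := by
    rw [e, Real.sin_two_mul]
    have hA : 0 ≤ u - u^3/6 := by nlinarith [mul_pos hu0 hu0, mul_nonneg hu0.le hu0.le]
    have hB : 0 ≤ 1 - u^2/2 := by nlinarith
    have := mul_le_mul hs hc hB (by linarith)
    have h5 : 3/2 * (1 - s) ≤ 2 * ((1 - u^2/6) * (1 - u^2/2)) := by
      nlinarith [sq_nonneg (u^2)]
    have := mul_le_mul_of_nonneg_left h5 hu0.le
    nlinarith
  rw [le_div_iff₀ (by positivity)]
  have := mul_le_mul_of_nonneg_left key (show 0 ≤ 2 * Real.pi / 3 by positivity)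
  refine le_trans (le_of_eq ?_) this
  rw [hu]; ring

lemma aux_sin (s : ℝ) (h0 : 0 ≤ s) (h1 : s ≤ 1) :
    s * (1 - s) / 2 ≤ (2 * Real.pi / 3) * Real.sin (Real.pi * s) / Real.pi^2 := by
  rcases le_total s (1/2) with h | h
  · exact aux_sin_half s h0 h
  · have := aux_sin_half (1 - s) (by linarith) (by linarith)
    rw [show Real.pi * (1 - s) = Real.pi - Real.pi * s by ring, Real.sin_pi_sub] at this
    linarith

lemma aux_bound (P : ℕ → ℝ[X]) (h0 : P 0 = X)
    (hd : ∀ l, derivative (derivative (P (l+1))) = P l)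
    (hz : ∀ l, (P (l+1)).eval 0 = 0) (ho : ∀ l, (P (l+1)).eval 1 = 0) (l : ℕ)
    (s : ℝ) (hs : s ∈ Set.Icc (0:ℝ) 1) :
    |(P l).eval s| + |(P l).eval (1 - s)| ≤ (2 * Real.pi / 3) / Real.pi^(2*l) := by
  have hpi := Real.pi_pos
  have hp3 := Real.pi_gt_three
  -- signs
  have sgn : ∀ l, ∀ s ∈ Set.Icc (0:ℝ) 1, 0 ≤ (-1)^l * (P l).eval s := by
    intro l
    induction l with
    | zero => intro s hs; simp [h0, hs.1]
    | succ l ih =>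
      apply aux_conc (fun s => (-1)^(l+1) * (P (l+1)).eval s)
        (fun s => (-1)^(l+1) * (derivative (P (l+1))).eval s)
        (fun s => (-1)^(l+1) * (P l).eval s)
      · exact fun x => ((P (l+1)).hasDerivAt x).const_mul _
      · intro x
        have := ((derivative (P (l+1))).hasDerivAt x).const_mul ((-1:ℝ)^(l+1))
        rwa [hd] at this
      · intro x hx
        have := ih x hx
        rw [pow_succ]; linarith
      · simp [hz]
      · simp [ho]
  -- comparison
  set G : ℕ → ℝ[X] := fun l => P l + (P l).comp (1 - X) with hG
  have hGd : ∀ l, derivative (derivative (G (l+1))) = G l := by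
    intro l
    simp [hG, derivative_comp, hd]
  have hG0 : ∀ l, (G (l+1)).eval 0 = 0 := by intro l; simp [hG, hz, ho]
  have hG1 : ∀ l, (G (l+1)).eval 1 = 0 := by intro l; simp [hG, hz, ho]
  have hg0 : G 0 = 1 := by simp [hG, h0]
  have hg1 : ∀ x : ℝ, (G 1).eval x = - (x * (1 - x) / 2) := by
    have : G 1 - C (1/2) * (X * X - X) = 0 := by
      apply aux_lin _ _ 0 1 (by norm_num)
      · simp [hG0]
      · simp [hG1]
      · simp only [derivative_sub, hGd 0, hg0]
        simp
        rw [← two_mul, mul_one, ← C_ofNat, ← C_mul]; norm_num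
    intro x
    rw [sub_eq_zero.mp this]; simp; ring
  have cmp : ∀ l, ∀ s ∈ Set.Icc (0:ℝ) 1, 0 ≤ (2 * Real.pi / 3) / Real.pi^(2*(l+1)) * Real.sin (Real.pi * s)
      - (-1)^(l+1) * (G (l+1)).eval s := by
    intro l
    induction l with
    | zero =>
      intro s hs
      have := aux_sin s hs.1 hs.2
      simp only [zero_add, hg1, pow_one, mul_one]
      rw [mul_div_right_comm (2 * Real.pi / 3)] at this
      linarith
    | succ l ih =>
      apply aux_conc (fun s => (2 * Real.pi / 3) / Real.pi^(2*(l+1+1)) * Real.sin (Real.pi * s)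
          - (-1)^(l+1+1) * (G (l+1+1)).eval s)
        (fun s => (2 * Real.pi / 3) / Real.pi^(2*(l+1+1)) * (Real.cos (Real.pi * s) * (Real.pi * 1))
          - (-1)^(l+1+1) * (derivative (G (l+1+1))).eval s)
        (fun s => (2 * Real.pi / 3) / Real.pi^(2*(l+1+1)) * ((- Real.sin (Real.pi * s) * (Real.pi * 1)) * (Real.pi * 1))
          - (-1)^(l+1+1) * (G (l+1)).eval s)
      · intro x
        exact ((((hasDerivAt_id x).const_mul Real.pi).sin).const_mul _).sub
          (((G (l+1+1)).hasDerivAt x).const_mul _)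
      · intro x
        have := ((derivative (G (l+1+1))).hasDerivAt x).const_mul ((-1:ℝ)^(l+1+1))
        rw [hGd] at this
        exact (((((hasDerivAt_id x).const_mul Real.pi).cos).mul_const _).const_mul _).sub this
      · intro x hx
        have := ih x hx
        have e : (2 * Real.pi / 3) / Real.pi^(2*(l+1)) = (2 * Real.pi / 3) / Real.pi^(2*(l+1+1)) * Real.pi^2 := by
          field_simp; ring
        rw [e] at this
        rw [pow_succ (-1:ℝ) (l+1)]
        nlinarith
      · simp [hG0]
      · simp [hG1]
  have hs' : 1 - s ∈ Set.Icc (0:ℝ) 1 := ⟨by linarith [hs.2], by linarith [hs.1]⟩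
  have ab : ∀ r ∈ Set.Icc (0:ℝ) 1, |(P l).eval r| = (-1)^l * (P l).eval r := by
    intro r hr
    have := abs_of_nonneg (sgn l r hr)
    rw [← this, abs_mul]; simp
  cases l with
  | zero =>
    simp only [h0, eval_X, mul_zero, pow_zero, div_one]
    rw [abs_of_nonneg hs.1, abs_of_nonneg hs'.1]
    linarith
  | succ l =>
    rw [ab s hs, ab _ hs']
    have := cmp l s hs
    have e : (G (l+1)).eval s = (P (l+1)).eval s + (P (l+1)).eval (1 - s) := by simp [hG]
    rw [e] at this
    have : (2 * Real.pi / 3) / Real.pi^(2*(l+1)) * Real.sin (Real.pi * s) ≤ (2 * Real.pi / 3) / Real.pi^(2*(l+1)) :=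
      mul_le_of_le_one_right (by positivity) (Real.sin_le_one _)
    linarith

lemma aux_find (x : ℕ → ℝ) (t : ℝ) (h0 : x 0 ≤ t) : ∀ N, 1 ≤ N → t ≤ x N →
    ∃ n, 1 ≤ n ∧ n ≤ N ∧ x (n-1) ≤ t ∧ t ≤ x n := by
  intro N hN
  induction N, hN using Nat.le_induction with
  | base => exact fun h => ⟨1, le_rfl, le_rfl, h0, h⟩
  | succ N hN ih =>
    intro h
    rcases le_total t (x N) with h1 | h1
    · obtain ⟨n, a, b, c⟩ := ih h1
      exact ⟨n, a, by omega, c⟩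
    · exact ⟨N+1, by omega, le_rfl, h1, h⟩

/-- Error between the Lidstone FIF `ℓ_α` and the classical Lidstone interpolation
function `φ`: `‖ℓ_α - φ‖_∞ ≤ (|α|_∞ / (1 - |α|_∞)) (‖φ‖_∞ + M_{0,2p})`, where
`M_{0,2p} = (2ρπ/3) ∑_{l=0}^{p} ((x N - x 0)/π)^(2l)` and
`ρ = max_{0 ≤ k ≤ p} max {|y 0 k|, |y N k|}`. -/
theorem lidstone_FIF_vs_classical (Λ : ℕ → ℝ → ℝ) (hΛ : LidstoneProp Λ)
    (p N : ℕ) (hp : 1 ≤ p) (hN : 1 ≤ N)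
    (x : ℕ → ℝ) (hx : ∀ n < N, x n < x (n + 1))
    (y : ℕ → ℕ → ℝ)
    (L : ℕ → ℝ → ℝ)
    (hL : ∀ n t, L n t = ((x n - x (n - 1)) / (x N - x 0)) * t +
      (x N * x (n - 1) - x 0 * x n) / (x N - x 0))
    (α : ℕ → ℝ)
    (hα : ∀ n, 1 ≤ n → n ≤ N →
      |α n| < ((x n - x (n - 1)) / (x N - x 0)) ^ (2 * p))
    (q : ℕ → ℝ → ℝ)
    (hq : ∀ n, 1 ≤ n → n ≤ N →
      (∃ P : Polynomial ℝ, P.natDegree ≤ 2 * p + 1 ∧ ∀ t, q n t = P.eval t) ∧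
      ∀ l ≤ p,
        iteratedDeriv (2 * l) (q n) (x 0) =
          ((x n - x (n - 1)) / (x N - x 0)) ^ (2 * l) * y (n - 1) l - α n * y 0 l ∧
        iteratedDeriv (2 * l) (q n) (x N) =
          ((x n - x (n - 1)) / (x N - x 0)) ^ (2 * l) * y n l - α n * y N l)
    (ℓ : ℝ → ℝ)
    (hℓcont : ContinuousOn ℓ (Set.Icc (x 0) (x N)))
    (hℓ : ∀ n, 1 ≤ n → n ≤ N → ∀ t ∈ Set.Icc (x 0) (x N),
      ℓ (L n t) = α n * ℓ t + q n t)
    (φ : ℝ → ℝ)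
    (hφcont : ContinuousOn φ (Set.Icc (x 0) (x N)))
    (hφ : ∀ n, 1 ≤ n → n ≤ N → ∀ t ∈ Set.Icc (x (n - 1)) (x n),
      φ t = ∑ l ∈ Finset.range (p + 1),
        (y (n - 1) l * Λ l ((x n - t) / (x n - x (n - 1))) +
          y n l * Λ l ((t - x (n - 1)) / (x n - x (n - 1)))) *
          (x n - x (n - 1)) ^ (2 * l))
    (ρ Aα : ℝ)
    (hρ : ρ = (Finset.range (p + 1)).sup'
      (Finset.nonempty_range_iff.mpr p.succ_ne_zero)
      (fun k => max |y 0 k| |y N k|))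
    (hAα : Aα = (Finset.Icc 1 N).sup' (Finset.nonempty_Icc.mpr hN)
      (fun n => |α n|)) :
    sSup ((fun t => |ℓ t - φ t|) '' Set.Icc (x 0) (x N)) ≤
      (Aα / (1 - Aα)) *
        (sSup ((fun t => |φ t|) '' Set.Icc (x 0) (x N)) +
          (2 * ρ * Real.pi / 3) *
            ∑ l ∈ Finset.range (p + 1), ((x N - x 0) / Real.pi) ^ (2 * l)) := by
  obtain ⟨hpoly, hΛ0, hΛs⟩ := hΛ
  choose P hP using hpoly
  have hΛP : ∀ l, Λ l = fun t => (P l).eval t := fun l => funext (hP l)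
  have h0 : P 0 = X := by
    apply Polynomial.funext; intro r; rw [← hP, hΛ0]; simp
  have hd : ∀ l, derivative (derivative (P (l+1))) = P l := by
    intro l
    apply Polynomial.funext; intro r
    have := (hΛs l).1 r
    rw [hΛP (l+1), aux_deriv, hP] at this
    exact this
  have hz : ∀ l, (P (l+1)).eval 0 = 0 := fun l => by rw [← hP]; exact (hΛs l).2.1
  have ho : ∀ l, (P (l+1)).eval 1 = 0 := fun l => by rw [← hP]; exact (hΛs l).2.2
  have hmono : ∀ n, n ≤ N → ∀ m, m ≤ n → x m ≤ x n := by
    intro n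
    induction n with
    | zero => intro _ m hm; rw [Nat.le_zero.mp hm]
    | succ n ih =>
      intro hn m hm
      rcases Nat.lt_or_ge m (n+1) with h | h
      · exact (ih (by omega) m (by omega)).trans (hx n (by omega)).le
      · rw [le_antisymm hm h]
  have hab : x 0 < x N := by
    have h1 := hx 0 (by omega)
    have h2 := hmono N le_rfl 1 hN
    simp only [zero_add] at h1
    linarith
  have hh : 0 < x N - x 0 := by linarith
  have hstep : ∀ n, 1 ≤ n → n ≤ N → x (n-1) < x n := by
    intro n h1 h2
    have := hx (n-1) (by omega)
    rwa [Nat.sub_add_cancel h1] at this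
  -- representation of q
  have hqrep : ∀ n, 1 ≤ n → n ≤ N → ∀ t, q n t = ∑ l ∈ Finset.range (p+1),
      ((((x n - x (n - 1)) / (x N - x 0)) ^ (2 * l) * y (n - 1) l - α n * y 0 l)
          * Λ l ((x N - t) / (x N - x 0)) +
       (((x n - x (n - 1)) / (x N - x 0)) ^ (2 * l) * y n l - α n * y N l)
          * Λ l ((t - x 0) / (x N - x 0))) * (x N - x 0)^(2*l) := by
    intro n h1 h2 t
    obtain ⟨⟨R, hRd, hR⟩, hv⟩ := hq n h1 h2
    have hqR : q n = fun t => R.eval t := funext hR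
    have hR0 : derivative^[2*p+2] R = 0 := iterate_derivative_eq_zero (by omega)
    have key := congrArg (fun S : ℝ[X] => S.eval t) (aux_repr P h0 hd hz ho (x 0) (x N) hab p R hR0)
    rw [hR t]
    refine Eq.trans key ?_
    simp only [eval_finsetSum]
    apply Finset.sum_congr rfl
    intro l hl
    have hl' : l ≤ p := by have := Finset.mem_range.mp hl; omega
    obtain ⟨v1, v2⟩ := hv l hl'
    rw [hqR, aux_deriv] at v1 v2
    simp only at v1 v2
    rw [v1, v2, hP, hP]
    simp only [eval_add, eval_mul, eval_C, eval_comp, eval_X]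
    have w1 : -1 / (x N - x 0) * t + x N / (x N - x 0) = (x N - t) / (x N - x 0) := by ring
    have w2 : 1 / (x N - x 0) * t + -x 0 / (x N - x 0) = (t - x 0) / (x N - x 0) := by ring
    rw [w1, w2]
  set B : ℝ → ℝ := fun t => ∑ l ∈ Finset.range (p+1),
      (y 0 l * Λ l ((x N - t) / (x N - x 0)) + y N l * Λ l ((t - x 0) / (x N - x 0)))
        * (x N - x 0)^(2*l) with hB
  set M : ℝ := (2 * ρ * Real.pi / 3) *
            ∑ l ∈ Finset.range (p + 1), ((x N - x 0) / Real.pi) ^ (2 * l) with hM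
  have hρl : ∀ l, l ≤ p → |y 0 l| ≤ ρ ∧ |y N l| ≤ ρ := by
    intro l hl
    have := Finset.le_sup' (fun k => max |y 0 k| |y N k|)
      (Finset.mem_range.mpr (Nat.lt_succ_of_le hl))
    rw [hρ]
    exact ⟨(le_max_left _ _).trans this, (le_max_right _ _).trans this⟩
  have hρ0 : 0 ≤ ρ := (abs_nonneg _).trans (hρl 0 (by omega)).1
  have hBM : ∀ t ∈ Set.Icc (x 0) (x N), |B t| ≤ M := by
    intro t ht
    rw [hB, hM, Finset.mul_sum]
    refine (Finset.abs_sum_le_sum_abs _ _).trans (Finset.sum_le_sum ?_)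
    intro l hl
    obtain ⟨r1, r2⟩ := hρl l (by have := Finset.mem_range.mp hl; omega)
    set s := (t - x 0) / (x N - x 0) with hs
    have hs1 : (x N - t) / (x N - x 0) = 1 - s := by rw [hs]; field_simp; ring
    have hsm : s ∈ Set.Icc (0:ℝ) 1 := by
      constructor
      · exact div_nonneg (by linarith [ht.1]) hh.le
      · rw [hs, div_le_one hh]; linarith [ht.2]
    have hb := aux_bound P h0 hd hz ho l s hsm
    rw [hs1, hP, hP, abs_mul, abs_of_nonneg (pow_nonneg hh.le (2*l))]
    have h3 : |y 0 l * (P l).eval (1 - s) + y N l * (P l).eval s| ≤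
        ρ * ((2 * Real.pi / 3) / Real.pi^(2*l)) := by
      refine (abs_add_le _ _).trans ?_
      rw [abs_mul, abs_mul]
      have g1 := mul_le_mul_of_nonneg_right r1 (abs_nonneg ((P l).eval (1 - s)))
      have g2 := mul_le_mul_of_nonneg_right r2 (abs_nonneg ((P l).eval s))
      have g3 := mul_le_mul_of_nonneg_left hb hρ0
      linarith
    refine (mul_le_mul_of_nonneg_right h3 (pow_nonneg hh.le (2*l))).trans (le_of_eq ?_)
    rw [div_pow]; ring
  -- bounds on A
  have hA : ∀ n, 1 ≤ n → n ≤ N → |α n| ≤ Aα := by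
    intro n h1 h2
    rw [hAα]
    exact Finset.le_sup' (fun n => |α n|) (Finset.mem_Icc.mpr ⟨h1, h2⟩)
  have hA0 : 0 ≤ Aα := (abs_nonneg _).trans (hA 1 le_rfl hN)
  have hA1 : Aα < 1 := by
    rw [hAα, Finset.sup'_lt_iff]
    intro n hn
    obtain ⟨h1, h2⟩ := Finset.mem_Icc.mp hn
    refine (hα n h1 h2).trans_le (pow_le_one₀ ?_ ?_)
    · exact div_nonneg (by linarith [hstep n h1 h2]) hh.le
    · rw [div_le_one hh]
      linarith [hmono N le_rfl n h2, hmono (n-1) (by omega) 0 (by omega)]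
  -- suprema
  have bdd1 : BddAbove ((fun t => |ℓ t - φ t|) '' Set.Icc (x 0) (x N)) :=
    isCompact_Icc.bddAbove_image (hℓcont.sub hφcont).abs
  have bdd2 : BddAbove ((fun t => |φ t|) '' Set.Icc (x 0) (x N)) :=
    isCompact_Icc.bddAbove_image hφcont.abs
  set E := sSup ((fun t => |ℓ t - φ t|) '' Set.Icc (x 0) (x N)) with hE
  set F := sSup ((fun t => |φ t|) '' Set.Icc (x 0) (x N)) with hF
  have main : E ≤ Aα * (E + (F + M)) := by
    apply csSup_le
    · exact (Set.nonempty_Icc.mpr hab.le).image _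
    rintro _ ⟨t, ht, rfl⟩
    obtain ⟨n, h1, h2, h3, h4⟩ := aux_find x t ht.1 N hN ht.2
    have hst := hstep n h1 h2
    have hd0 : 0 < x n - x (n-1) := by linarith
    set s := x 0 + (t - x (n-1)) / (x n - x (n-1)) * (x N - x 0) with hs
    have hw0 : 0 ≤ (t - x (n-1)) / (x n - x (n-1)) := div_nonneg (by linarith) hd0.le
    have hw1 : (t - x (n-1)) / (x n - x (n-1)) ≤ 1 := by rw [div_le_one hd0]; linarith
    have hsI : s ∈ Set.Icc (x 0) (x N) := by
      constructor <;> rw [hs] <;> nlinarith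
    have hLs : L n s = t := by
      rw [hL, hs]; field_simp; ring
    have u1 : (s - x 0) / (x N - x 0) = (t - x (n-1)) / (x n - x (n-1)) := by
      rw [hs]; field_simp; ring
    have u2 : (x N - s) / (x N - x 0) = (x n - t) / (x n - x (n-1)) := by
      rw [hs]; field_simp; ring
    have hdiff : ℓ t - φ t = α n * ((ℓ s - φ s) + (φ s - B s)) := by
      have hq' : q n s = φ t - α n * B s := by
        rw [hqrep n h1 h2 s, hφ n h1 h2 t ⟨h3, h4⟩, hB]
        simp only
        rw [Finset.mul_sum, ← Finset.sum_sub_distrib]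
        apply Finset.sum_congr rfl
        intro l _
        rw [u1, u2, div_pow]
        have := (pow_pos hh (2*l)).ne'
        field_simp
        ring
      have := hℓ n h1 h2 s hsI
      rw [hLs, hq'] at this
      rw [this]; ring
    have v1 : |ℓ s - φ s| ≤ E := le_csSup bdd1 ⟨s, hsI, rfl⟩
    have v2 : |φ s| ≤ F := le_csSup bdd2 ⟨s, hsI, rfl⟩
    have v3 := hBM s hsI
    simp only
    rw [hdiff, abs_mul]
    refine mul_le_mul (hA n h1 h2) ?_ (abs_nonneg _) hA0
    refine (abs_add_le _ _).trans ?_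
    have := abs_sub (φ s) (B s)
    linarith
  rw [div_mul_eq_mul_div, le_div_iff₀ (by linarith)]
  linarith
end
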